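/- arXiv:1604.00753 — 2 statements merged into one kernel-verified Lean document; each statement's English description precedes it below -/
import Mathlib

section
/- The zeroth Fourier cosine coefficient of x·log Γ(x) on (0,1) satisfies 2·∫₀¹ x·log Γ(x) dx = (1/2)·log(2π/A⁴), where A = e^{1/12 − ζ′(−1)} is the Glaisher–Kinkelin constant. Equivalently, ∫₀¹ x·log Γ(x) dx = (1/4)log(2π) − 1/12 + ζ′(−1). -/
open Real intervalIntegral

open Filter Topology Set

/-!
Replace `log Γ` by the logarithm of Euler's product, to which it is uniformly close on `(0, 1]`.
Integrating `x * log (x + m)` in closed form and summing over `m` leaves `log n!` and the logarithm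
of the hyperfactorial `∏ k ^ k`. Stirling's formula handles the first. For the second, the
Euler–Maclaurin approximations to the entire function `(s - 1) * ζ(s)` converge locally uniformly on
`-2 < re s`, hence so do their derivatives, which at `s = -1` are twice the logarithms of
hyperfactorials up to elementary terms.
-/

lemma abs_sub_mul_sub_mul_div_le {a b x : ℝ} (hx : x ∈ Icc a b) :
    |(x - a) * (x - b) * (2 * x - a - b) / 12| ≤ (b - a) ^ 3 / 12 := by
  have hba : 0 ≤ b - a := by linarith [hx.1, hx.2]
  have ha : |x - a| ≤ b - a := abs_le.2 ⟨by linarith [hx.1], by linarith [hx.2]⟩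
  have hb : |x - b| ≤ b - a := abs_le.2 ⟨by linarith [hx.1], by linarith [hx.2]⟩
  have hab : |2 * x - a - b| ≤ b - a := abs_le.2 ⟨by linarith [hx.1], by linarith [hx.2]⟩
  calc |(x - a) * (x - b) * (2 * x - a - b) / 12|
      = |x - a| * |x - b| * |2 * x - a - b| / 12 := by simp only [abs_div, abs_mul, Nat.abs_ofNat]
    _ ≤ (b - a) * (b - a) * (b - a) / 12 := by gcongr
    _ = (b - a) ^ 3 / 12 := by ring

lemma norm_corrected_trapezoid_error_le {E : Type*} [NormedAddCommGroup E] [NormedSpace ℝ E]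
    {F f f₁ f₂ f₃ : ℝ → E} {a b C : ℝ} (hab : a ≤ b)
    (hF : ∀ x ∈ Icc a b, HasDerivWithinAt F (f x) (Icc a b) x)
    (hf : ∀ x ∈ Icc a b, HasDerivWithinAt f (f₁ x) (Icc a b) x)
    (hf₁ : ∀ x ∈ Icc a b, HasDerivWithinAt f₁ (f₂ x) (Icc a b) x)
    (hf₂ : ∀ x ∈ Icc a b, HasDerivWithinAt f₂ (f₃ x) (Icc a b) x)
    (hC : ∀ x ∈ Icc a b, ‖f₃ x‖ ≤ C) :
    ‖F b - F a - ((b - a) / 2) • (f a + f b) + ((b - a) ^ 2 / 12) • (f₁ b - f₁ a)‖ ≤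
      C * (b - a) ^ 4 / 12 := by
  -- Integrate by parts against the Bernoulli polynomials `B₁`, `B₂`, `B₃` rescaled to `[a, b]`,
  -- `B₃` vanishing at both ends; `G` is `F` minus the resulting boundary terms.
  let B₁ : ℝ → ℝ := fun x => x - (a + b) / 2
  let B₂ : ℝ → ℝ := fun x => (x - a) * (x - b) / 2 + (b - a) ^ 2 / 12
  let B₃ : ℝ → ℝ := fun x => (x - a) * (x - b) * (2 * x - a - b) / 12
  have hB₁ (x : ℝ) : HasDerivAt B₁ 1 x := (hasDerivAt_id x).sub_const _
  have hB₂ (x : ℝ) : HasDerivAt B₂ (B₁ x) x := by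
    have h := ((((hasDerivAt_id x).sub_const a).mul ((hasDerivAt_id x).sub_const b)).div_const
      2).add_const ((b - a) ^ 2 / 12)
    exact h.congr_deriv (by simp only [id, B₁]; ring)
  have hB₃ (x : ℝ) : HasDerivAt B₃ (B₂ x) x := by
    have h := ((((hasDerivAt_id x).sub_const a).mul ((hasDerivAt_id x).sub_const b)).mul
      ((((hasDerivAt_id x).const_mul 2).sub_const a).sub_const b)).div_const 12
    exact h.congr_deriv (by simp only [id, B₂, Pi.mul_apply]; ring)
  let G : ℝ → E := fun x => F x - B₁ x • f x + B₂ x • f₁ x - B₃ x • f₂ x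
  have hG (x : ℝ) (hx : x ∈ Icc a b) : HasDerivWithinAt G (-(B₃ x • f₃ x)) (Icc a b) x := by
    have h := (((hF x hx).sub ((hB₁ x).hasDerivWithinAt.smul (hf x hx))).add
      ((hB₂ x).hasDerivWithinAt.smul (hf₁ x hx))).sub
      ((hB₃ x).hasDerivWithinAt.smul (hf₂ x hx))
    exact h.congr_deriv (by module)
  have hG_le (x : ℝ) (hx : x ∈ Ico a b) : ‖-(B₃ x • f₃ x)‖ ≤ (b - a) ^ 3 / 12 * C := by
    have hx' := Ico_subset_Icc_self hx
    rw [norm_neg, norm_smul, Real.norm_eq_abs]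
    gcongr
    exacts [abs_sub_mul_sub_mul_div_le hx', hC x hx']
  have hGab : G b - G a =
      F b - F a - ((b - a) / 2) • (f a + f b) + ((b - a) ^ 2 / 12) • (f₁ b - f₁ a) := by
    simp only [G, B₁, B₂, B₃, sub_self, mul_zero, zero_mul, zero_div, zero_smul]
    module
  have h := norm_image_sub_le_of_norm_deriv_le_segment' hG hG_le b (right_mem_Icc.2 hab)
  rw [hGab] at h
  exact h.trans_eq (by ring)

/-- The Euler–Maclaurin approximation to `(s - 1) * ζ(s)` that sums `k ^ (-s)` over `1 ≤ k ≤ n` and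
keeps the correction terms up to `B₂`; it converges to `riemannZeta₁ s` for `-2 < re s`.
The value at `n = 0` is only the base point of a telescoping sum. -/
noncomputable def riemannZeta₁Approx (n : ℕ) (s : ℂ) : ℂ :=
  (s - 1) * ∑ k ∈ Finset.range n, ((k + 1 : ℕ) : ℂ) ^ (-s) + (n : ℂ) ^ (1 - s)
    - (s - 1) / 2 * (n : ℂ) ^ (-s) + s * (s - 1) / 12 * (n : ℂ) ^ (-s - 1)

lemma differentiable_riemannZeta₁Approx {n : ℕ} (hn : n ≠ 0) :
    Differentiable ℂ (riemannZeta₁Approx n) := by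
  have hn' : (n : ℂ) ≠ 0 := Nat.cast_ne_zero.2 hn
  unfold riemannZeta₁Approx
  fun_prop (disch := simp [hn'])

lemma hasDerivAt_ofReal_cpow {x : ℝ} (hx : 0 < x) (r : ℂ) :
    HasDerivAt (fun y : ℝ => (y : ℂ) ^ r) (r * (x : ℂ) ^ (r - 1)) x := by
  simpa using ((hasDerivAt_id (x : ℂ)).cpow_const (c := r)
    (Complex.ofReal_mem_slitPlane.2 hx)).comp_ofReal

lemma norm_riemannZeta₁Approx_succ_sub_le {n : ℕ} (hn : n ≠ 0) {s : ℂ} (hs : -3 ≤ s.re) :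
    ‖riemannZeta₁Approx (n + 1) s - riemannZeta₁Approx n s‖ ≤
      ‖(s - 1) * s * (s + 1) * (s + 2)‖ * (n : ℝ) ^ (-s.re - 3) / 12 := by
  have hn₀ : (0 : ℝ) < n := Nat.cast_pos.2 (Nat.pos_of_ne_zero hn)
  let I : Set ℝ := Icc (n : ℝ) (n + 1)
  let F : ℝ → ℂ := fun x => (x : ℂ) ^ (1 - s)
  let f : ℝ → ℂ := fun x => (1 - s) * (x : ℂ) ^ (-s)
  let f₁ : ℝ → ℂ := fun x => s * (s - 1) * (x : ℂ) ^ (-s - 1)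
  let f₂ : ℝ → ℂ := fun x => -((s - 1) * s * (s + 1)) * (x : ℂ) ^ (-s - 2)
  let f₃ : ℝ → ℂ := fun x => (s - 1) * s * (s + 1) * (s + 2) * (x : ℂ) ^ (-s - 3)
  have hpow (r : ℂ) (x : ℝ) (hx : x ∈ I) :=
    (hasDerivAt_ofReal_cpow (hn₀.trans_le hx.1) r).hasDerivWithinAt (s := I)
  have hF (x) (hx : x ∈ I) : HasDerivWithinAt F (f x) I x :=
    (hpow (1 - s) x hx).congr_deriv (by simp only [f]; ring_nf)
  have hf (x) (hx : x ∈ I) : HasDerivWithinAt f (f₁ x) I x :=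
    ((hpow (-s) x hx).const_mul _).congr_deriv (by simp only [f₁]; ring_nf)
  have hf₁ (x) (hx : x ∈ I) : HasDerivWithinAt f₁ (f₂ x) I x :=
    ((hpow (-s - 1) x hx).const_mul _).congr_deriv (by simp only [f₂]; ring_nf)
  have hf₂ (x) (hx : x ∈ I) : HasDerivWithinAt f₂ (f₃ x) I x :=
    ((hpow (-s - 2) x hx).const_mul _).congr_deriv (by simp only [f₃]; ring_nf)
  have hf₃ (x) (hx : x ∈ I) :
      ‖f₃ x‖ ≤ ‖(s - 1) * s * (s + 1) * (s + 2)‖ * (n : ℝ) ^ (-s.re - 3) := by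
    rw [norm_mul, Complex.norm_cpow_eq_rpow_re_of_pos (hn₀.trans_le hx.1)]
    gcongr
    exact Real.rpow_le_rpow_of_nonpos hn₀ hx.1 (by simp; linarith)
  have hstep : riemannZeta₁Approx (n + 1) s - riemannZeta₁Approx n s =
      F (n + 1) - F n - ((n + 1 - n : ℝ) / 2) • (f n + f (n + 1))
        + ((n + 1 - n : ℝ) ^ 2 / 12) • (f₁ (n + 1) - f₁ n) := by
    simp only [riemannZeta₁Approx, F, f, f₁, Finset.sum_range_succ, Complex.real_smul]
    push_cast
    ring
  rw [hstep]
  exact (norm_corrected_trapezoid_error_le (by linarith) hF hf hf₁ hf₂ hf₃).trans_eq (by ring)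

lemma tendstoLocallyUniformlyOn_riemannZeta₁Approx_tsum :
    TendstoLocallyUniformlyOn riemannZeta₁Approx
      (fun s => riemannZeta₁Approx 0 s +
        ∑' n, (riemannZeta₁Approx (n + 1) s - riemannZeta₁Approx n s))
      atTop {s | -2 < s.re} := by
  refine tendstoLocallyUniformlyOn_of_forall_exists_nhds fun s₀ (hs₀ : -2 < s₀.re) => ?_
  obtain ⟨σ, hσ, hσs₀⟩ := exists_between hs₀
  let p : ℂ → ℝ := fun s => ‖(s - 1) * s * (s + 1) * (s + 2)‖
  have hp : Continuous p := by fun_prop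
  let U : Set ℂ := {s | σ < s.re ∧ p s < p s₀ + 1}
  have hU : U ∈ 𝓝 s₀ :=
    ((isOpen_lt continuous_const Complex.continuous_re).inter
      (isOpen_lt hp continuous_const)).mem_nhds ⟨hσs₀, lt_add_one (p s₀)⟩
  refine ⟨_, mem_nhdsWithin_of_mem_nhds hU, ?_⟩
  have hsum : Summable fun n : ℕ => (p s₀ + 1) * (n : ℝ) ^ (-σ - 3) / 12 :=
    ((Real.summable_nat_rpow.2 (by linarith)).mul_left _).div_const _
  have hbound : ∀ᶠ n : ℕ in atTop, ∀ s ∈ U,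
      ‖riemannZeta₁Approx (n + 1) s - riemannZeta₁Approx n s‖ ≤
        (p s₀ + 1) * (n : ℝ) ^ (-σ - 3) / 12 := by
    filter_upwards [eventually_ge_atTop 1] with n hn s ⟨hσs, hps⟩
    refine (norm_riemannZeta₁Approx_succ_sub_le (by omega) (by linarith)).trans ?_
    have hn' : (1 : ℝ) ≤ n := Nat.one_le_cast.2 hn
    gcongr
  have h := tendstoUniformlyOn_tsum_nat_eventually hsum hbound
  have htel (N : ℕ) (s : ℂ) : riemannZeta₁Approx N s = riemannZeta₁Approx 0 s +
      ∑ n ∈ Finset.range N, (riemannZeta₁Approx (n + 1) s - riemannZeta₁Approx n s) := by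
    rw [Finset.sum_range_sub (riemannZeta₁Approx · s), add_sub_cancel]
  have hconst : TendstoUniformlyOn (fun _ : ℕ => riemannZeta₁Approx 0) (riemannZeta₁Approx 0) atTop
      U := fun u hu => .of_forall fun _ s _ => refl_mem_uniformity hu
  exact (hconst.add h).congr (.of_forall fun N s _ => (htel N s).symm)

lemma tendsto_natCast_cpow_zero {r : ℂ} (hr : r.re < 0) :
    Tendsto (fun n : ℕ => (n : ℂ) ^ r) atTop (𝓝 0) := by
  rw [tendsto_zero_iff_norm_tendsto_zero]
  have h := (tendsto_rpow_neg_atTop (neg_pos.2 hr)).comp tendsto_natCast_atTop_atTop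
  refine h.congr' ?_
  filter_upwards [eventually_gt_atTop 0] with n hn
  rw [Function.comp_apply, neg_neg, Complex.norm_natCast_cpow_of_pos hn]

lemma riemannZeta₁_eq_sub_one_mul {s : ℂ} (hs : s ≠ 1) :
    riemannZeta₁ s = (s - 1) * riemannZeta s := by
  rw [riemannZeta_eq_inv_sub_mul hs, mul_inv_cancel_left₀ (sub_ne_zero.2 hs)]

lemma deriv_riemannZeta₁ {s : ℂ} (hs : s ≠ 1) :
    deriv riemannZeta₁ s = riemannZeta s + (s - 1) * deriv riemannZeta s := by
  have heq : riemannZeta₁ =ᶠ[𝓝 s] fun z => (z - 1) * riemannZeta z := by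
    filter_upwards [isOpen_ne.mem_nhds hs] with z hz using riemannZeta₁_eq_sub_one_mul hz
  rw [heq.deriv_eq]
  have h := ((hasDerivAt_id s).sub_const 1).mul (differentiableAt_riemannZeta hs).hasDerivAt
  simpa [Pi.mul_def] using h.deriv

lemma tendsto_riemannZeta₁Approx_of_one_lt_re {s : ℂ} (hs : 1 < s.re) :
    Tendsto (riemannZeta₁Approx · s) atTop (𝓝 (riemannZeta₁ s)) := by
  have hs₁ : s ≠ 1 := by rintro rfl; simp at hs
  have hzeta : HasSum (fun n : ℕ => ((n + 1 : ℕ) : ℂ) ^ (-s)) (riemannZeta s) := by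
    have hsum := (summable_nat_add_iff 1).2 (Complex.summable_one_div_nat_cpow.2 hs)
    rw [zeta_eq_tsum_one_div_nat_add_one_cpow hs]
    simpa [Complex.cpow_neg] using hsum.hasSum
  have h := (((hzeta.tendsto_sum_nat.const_mul (s - 1)).add
    (tendsto_natCast_cpow_zero (r := 1 - s) (by simpa using hs))).sub
    ((tendsto_natCast_cpow_zero (r := -s) (by simp; linarith)).const_mul ((s - 1) / 2))).add
    ((tendsto_natCast_cpow_zero (r := -s - 1) (by simp; linarith)).const_mul (s * (s - 1) / 12))
  simpa [riemannZeta₁Approx, riemannZeta₁_eq_sub_one_mul hs₁] using h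

lemma tendstoLocallyUniformlyOn_riemannZeta₁Approx :
    TendstoLocallyUniformlyOn riemannZeta₁Approx riemannZeta₁ atTop {s | -2 < s.re} := by
  have hlim := tendstoLocallyUniformlyOn_riemannZeta₁Approx_tsum
  have hU : IsOpen {s : ℂ | -2 < s.re} := isOpen_lt continuous_const Complex.continuous_re
  have hdiff := hlim.differentiableOn ((eventually_ne_atTop 0).mono fun n hn =>
    (differentiable_riemannZeta₁Approx hn).differentiableOn) hU
  refine hlim.congr_right ((hdiff.analyticOnNhd hU).eqOn_of_preconnected_of_eventuallyEq
    (differentiable_riemannZeta₁.differentiableOn.analyticOnNhd hU)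
    (convex_halfSpace_re_gt (-2)).isPreconnected (z₀ := 2) (by simp) ?_)
  filter_upwards [(isOpen_lt continuous_const Complex.continuous_re).mem_nhds
    (show (1 : ℝ) < (2 : ℂ).re by norm_num)] with s (hs : 1 < s.re)
  exact tendsto_nhds_unique (hlim.tendsto_at (show -2 < s.re by linarith))
    (tendsto_riemannZeta₁Approx_of_one_lt_re hs)

/-- The logarithm of the hyperfactorial `∏ k ∈ {1, …, n}, k ^ k`, whose asymptotic expansion defines
the Glaisher–Kinkelin constant. -/
noncomputable def logHyperfactorial (n : ℕ) : ℝ :=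
  ∑ k ∈ Finset.range n, ((k : ℝ) + 1) * Real.log (k + 1)

lemma logHyperfactorial_succ (n : ℕ) :
    logHyperfactorial (n + 1) = logHyperfactorial n + ((n : ℝ) + 1) * Real.log (n + 1) :=
  Finset.sum_range_succ _ n

lemma sum_range_natCast_add_one {K : Type*} [Field K] [CharZero K] (n : ℕ) :
    ∑ k ∈ Finset.range n, ((k : K) + 1) = n * (n + 1) / 2 := by
  induction n with
  | zero => simp
  | succ n ih =>
    rw [Finset.sum_range_succ, ih]
    push_cast
    ring

lemma hasDerivAt_natCast_cpow {n : ℕ} (hn : n ≠ 0) {f : ℂ → ℂ} {f' s : ℂ}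
    (hf : HasDerivAt f f' s) :
    HasDerivAt (fun z => (n : ℂ) ^ f z) ((n : ℂ) ^ f s * Real.log n * f') s := by
  rw [Complex.natCast_log]
  exact hf.const_cpow (.inl (Nat.cast_ne_zero.2 hn))

lemma hasDerivAt_riemannZeta₁Approx_neg_one {n : ℕ} (hn : n ≠ 0) :
    HasDerivAt (riemannZeta₁Approx n)
      ((2 * (logHyperfactorial n - ((n : ℝ) ^ 2 / 2 + n / 2 + 1 / 12) * Real.log n + n ^ 2 / 4)
        - 1 / 4 : ℝ) : ℂ) (-1) := by
  have hid := hasDerivAt_id (-1 : ℂ)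
  have hsum : HasDerivAt (fun s : ℂ => ∑ k ∈ Finset.range n, ((k + 1 : ℕ) : ℂ) ^ (-s))
      (-logHyperfactorial n : ℂ) (-1) := by
    refine (HasDerivAt.fun_sum fun k _ =>
      hasDerivAt_natCast_cpow k.succ_ne_zero hid.neg).congr_deriv ?_
    simp [logHyperfactorial]
  have h := ((((hid.sub_const 1).mul hsum).add (hasDerivAt_natCast_cpow hn (hid.const_sub 1))).sub
    (((hid.sub_const 1).div_const 2).mul (hasDerivAt_natCast_cpow hn hid.neg))).add
    (((hid.mul (hid.sub_const 1)).div_const 12).mul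
      (hasDerivAt_natCast_cpow hn (hid.neg.sub_const 1)))
  refine h.congr_deriv ?_
  norm_num [sum_range_natCast_add_one]
  ring

lemma riemannZeta_neg_one : riemannZeta (-1) = -1 / 12 := by
  have h := riemannZeta_neg_nat_eq_bernoulli' 1
  rw [Nat.cast_one, one_add_one_eq_two, bernoulli'_two] at h
  exact h.trans (by norm_num)

lemma tendsto_logHyperfactorial_sub :
    Tendsto (fun n : ℕ => logHyperfactorial n
        - ((n : ℝ) ^ 2 / 2 + n / 2 + 1 / 12) * Real.log n + n ^ 2 / 4)
      atTop (𝓝 (1 / 12 - (deriv riemannZeta (-1)).re)) := by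
  have hU : IsOpen {s : ℂ | -2 < s.re} := isOpen_lt continuous_const Complex.continuous_re
  have hderiv : Tendsto (fun n => deriv (riemannZeta₁Approx n) (-1)) atTop
      (𝓝 (deriv riemannZeta₁ (-1))) :=
    (tendstoLocallyUniformlyOn_riemannZeta₁Approx.deriv ((eventually_ne_atTop 0).mono fun n hn =>
      (differentiable_riemannZeta₁Approx hn).differentiableOn) hU).tendsto_at (by norm_num)
  rw [deriv_riemannZeta₁ (by norm_num), riemannZeta_neg_one] at hderiv
  have hre := (((Complex.continuous_re.tendsto _).comp hderiv).add_const (1 / 4)).div_const 2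
  have hlim : (-1 / 12 + (-1 - 1) * deriv riemannZeta (-1)).re / 2 + 1 / 4 / 2
      = 1 / 12 - (deriv riemannZeta (-1)).re := by
    norm_num
    ring
  rw [add_div, hlim] at hre
  refine hre.congr' ?_
  filter_upwards [eventually_ne_atTop 0] with n hn
  rw [Function.comp_apply, (hasDerivAt_riemannZeta₁Approx_neg_one hn).deriv, Complex.ofReal_re]
  ring

lemma intervalIntegrable_mul_log_add (a b c : ℝ) :
    IntervalIntegrable (fun x => x * Real.log (x + c)) MeasureTheory.volume a b := by
  have hlog : IntervalIntegrable (fun x => Real.log (x + c)) MeasureTheory.volume a b := by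
    simpa using (intervalIntegrable_log' (a := a + c) (b := b + c)).comp_add_right c
  exact hlog.continuousOn_mul continuousOn_id

lemma integral_mul_log_add (a b c : ℝ) :
    ∫ x in a..b, x * Real.log (x + c) =
      ((b ^ 2 - c ^ 2) / 2 * Real.log (b + c) - b ^ 2 / 4 + c * b / 2)
        - ((a ^ 2 - c ^ 2) / 2 * Real.log (a + c) - a ^ 2 / 4 + c * a / 2) := by
  let F : ℝ → ℝ := fun x => (x ^ 2 - c ^ 2) / 2 * Real.log (x + c) - x ^ 2 / 4 + c * x / 2
  have hF : Continuous F := by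
    have hmul : Continuous fun x => (x + c) * Real.log (x + c) :=
      Real.continuous_mul_log.comp (continuous_add_const c)
    have hF_eq : F = fun x => (x - c) / 2 * ((x + c) * Real.log (x + c)) - x ^ 2 / 4 + c * x / 2 :=
      funext fun x => by simp only [F]; ring
    rw [hF_eq]
    exact ((Continuous.mul (by fun_prop) hmul).sub (by fun_prop)).add (by fun_prop)
  refine MeasureTheory.integral_eq_of_hasDerivAt_off_countable F _
    (countable_singleton (-c)) hF.continuousOn (fun x hx => ?_)
    (intervalIntegrable_mul_log_add a b c)
  have hxc : x + c ≠ 0 := fun h => hx.2 (eq_neg_of_add_eq_zero_left h)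
  have h := (((((hasDerivAt_pow 2 x).sub_const (c ^ 2)).div_const 2).mul
    (((hasDerivAt_id x).add_const c).log hxc)).sub ((hasDerivAt_pow 2 x).div_const 4)).add
    (((hasDerivAt_id x).const_mul c).div_const 2)
  refine h.congr_deriv ?_
  simp only [id_eq, Nat.cast_ofNat, Nat.add_one_sub_one, pow_one]
  field_simp
  ring

lemma sum_integral_mul_log_add_natCast (n : ℕ) :
    ∑ m ∈ Finset.range n, ∫ x in (0 : ℝ)..1, x * Real.log (x + m) =
      logHyperfactorial n - (n : ℝ) ^ 2 / 2 * Real.log n + n ^ 2 / 4 - n / 2 := by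
  induction n with
  | zero => simp [logHyperfactorial]
  | succ n ih =>
    rw [Finset.sum_range_succ, ih, logHyperfactorial_succ, integral_mul_log_add]
    push_cast
    ring_nf

lemma mul_logGammaSeq_eq (n : ℕ) (x : ℝ) :
    x * BohrMollerup.logGammaSeq x n = Real.log n * x ^ 2 + Real.log n.factorial * x
      - ∑ m ∈ Finset.range (n + 1), x * Real.log (x + m) := by
  rw [BohrMollerup.logGammaSeq, ← Finset.mul_sum]
  ring

lemma intervalIntegrable_sum_mul_log_add_natCast (a b : ℝ) (n : ℕ) :
    IntervalIntegrable (fun x => ∑ m ∈ Finset.range n, x * Real.log (x + m))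
      MeasureTheory.volume a b := by
  simpa only [Finset.sum_fn] using IntervalIntegrable.sum (Finset.range n)
    fun m _ => intervalIntegrable_mul_log_add a b m

lemma integral_mul_logGammaSeq (n : ℕ) :
    ∫ x in (0 : ℝ)..1, x * BohrMollerup.logGammaSeq x n =
      Real.log n / 3 + Real.log n.factorial / 2
        - (logHyperfactorial (n + 1) - (n + 1 : ℝ) ^ 2 / 2 * Real.log (n + 1)
          + (n + 1 : ℝ) ^ 2 / 4 - (n + 1) / 2) := by
  have hsq : IntervalIntegrable (fun x => Real.log n * x ^ 2) MeasureTheory.volume 0 1 :=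
    Continuous.intervalIntegrable (by fun_prop) _ _
  have hlin : IntervalIntegrable (fun x => Real.log n.factorial * x) MeasureTheory.volume 0 1 :=
    Continuous.intervalIntegrable (by fun_prop) _ _
  simp_rw [mul_logGammaSeq_eq]
  rw [integral_sub (hsq.add hlin) (intervalIntegrable_sum_mul_log_add_natCast 0 1 _),
    integral_add hsq hlin,
    integral_finsetSum fun (m : ℕ) _ => intervalIntegrable_mul_log_add 0 1 m,
    sum_integral_mul_log_add_natCast, integral_const_mul, integral_const_mul, integral_pow,
    integral_id]
  push_cast
  ring

lemma abs_logGammaSeq_sub_log_Gamma_le {x : ℝ} (hx₀ : 0 < x) (hx₁ : x ≤ 1) {n : ℕ} (hn : n ≠ 0) :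
    |BohrMollerup.logGammaSeq x n - Real.log (Real.Gamma x)| ≤ Real.log (n + 1) - Real.log n := by
  have hfeq {y : ℝ} (hy : 0 < y) :
      (Real.log ∘ Real.Gamma) (y + 1) = (Real.log ∘ Real.Gamma) y + Real.log y := by
    rw [Function.comp_apply, Function.comp_apply, Real.Gamma_add_one hy.ne',
      Real.log_mul hy.ne' (Real.Gamma_pos_of_pos hy).ne', add_comm]
  have hle := BohrMollerup.le_logGammaSeq Real.convexOn_log_Gamma hfeq hx₀ hx₁ n
  have hge := BohrMollerup.ge_logGammaSeq Real.convexOn_log_Gamma hfeq hx₀ hn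
  simp only [Function.comp_apply, Real.Gamma_one, Real.log_one, zero_add] at hle hge
  have hlog : 0 ≤ Real.log (n + 1) - Real.log n :=
    sub_nonneg.2 (Real.log_le_log (by positivity) (by linarith))
  have hxlog := mul_le_of_le_one_left hlog hx₁
  exact abs_le.2 ⟨by linarith, by linarith⟩

lemma tendstoUniformlyOn_mul_logGammaSeq :
    TendstoUniformlyOn (fun n x => x * BohrMollerup.logGammaSeq x n)
      (fun x => x * Real.log (Real.Gamma x)) atTop (Icc 0 1) := by
  refine Metric.tendstoUniformlyOn_iff.2 fun ε hε => ?_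
  filter_upwards [tendsto_log_nat_add_one_sub_log.eventually_lt_const hε, eventually_ne_atTop 0]
    with n hnε hn x ⟨hx₀, hx₁⟩
  rcases hx₀.eq_or_lt with rfl | hx₀
  · simpa using hε
  calc dist (x * Real.log (Real.Gamma x)) (x * BohrMollerup.logGammaSeq x n)
      = x * |BohrMollerup.logGammaSeq x n - Real.log (Real.Gamma x)| := by
        rw [dist_comm, Real.dist_eq, ← mul_sub, abs_mul, abs_of_pos hx₀]
    _ ≤ |BohrMollerup.logGammaSeq x n - Real.log (Real.Gamma x)| :=
        mul_le_of_le_one_left (abs_nonneg _) hx₁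
    _ ≤ Real.log (n + 1) - Real.log n := abs_logGammaSeq_sub_log_Gamma_le hx₀ hx₁ hn
    _ < ε := hnε

lemma continuousOn_mul_logGammaSeq (n : ℕ) :
    ContinuousOn (fun x => x * BohrMollerup.logGammaSeq x n) (Ici 0) := by
  simp_rw [mul_logGammaSeq_eq]
  refine ContinuousOn.sub (by fun_prop) (continuousOn_finsetSum _ fun m _ => ?_)
  rcases m.eq_zero_or_pos with rfl | hm
  · simpa using Real.continuous_mul_log.continuousOn
  · refine continuousOn_id.mul (ContinuousOn.log (by fun_prop) fun x (hx : 0 ≤ x) => ?_)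
    positivity

lemma tendsto_integral_mul_logGammaSeq :
    Tendsto (fun n : ℕ => ∫ x in (0 : ℝ)..1, x * BohrMollerup.logGammaSeq x n) atTop
      (𝓝 (∫ x in (0 : ℝ)..1, x * Real.log (Real.Gamma x))) := by
  have hIcc : uIcc (0 : ℝ) 1 = Icc 0 1 := uIcc_of_le zero_le_one
  refine TendstoUniformlyOn.tendsto_intervalIntegral_of_continuousOn (.of_forall fun n => ?_)
    (hIcc ▸ tendstoUniformlyOn_mul_logGammaSeq)
  exact (continuousOn_mul_logGammaSeq n).mono (hIcc ▸ Icc_subset_Ici_self)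

lemma tendsto_log_factorial_sub :
    Tendsto (fun n : ℕ => Real.log n.factorial - (n * Real.log n - n + Real.log n / 2)) atTop
      (𝓝 (Real.log (2 * π) / 2)) := by
  have h := ((Real.continuousAt_log (by positivity)).tendsto.comp
    Stirling.tendsto_stirlingSeq_sqrt_pi).add_const (Real.log 2 / 2)
  have hlim : Real.log √π + Real.log 2 / 2 = Real.log (2 * π) / 2 := by
    rw [Real.log_sqrt pi_pos.le, Real.log_mul two_ne_zero pi_ne_zero]
    ring
  rw [hlim] at h
  refine h.congr' ?_
  filter_upwards [eventually_ne_atTop 0] with n hn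
  have hn' : (n : ℝ) ≠ 0 := Nat.cast_ne_zero.2 hn
  rw [Function.comp_apply, Stirling.log_stirlingSeq_formula, Real.log_mul two_ne_zero hn',
    Real.log_div hn' (Real.exp_ne_zero 1), Real.log_exp]
  ring

lemma integral_mul_log_Gamma :
    ∫ x in (0 : ℝ)..1, x * Real.log (Real.Gamma x) =
      (1 / 4) * Real.log (2 * π) - 1 / 12 + (deriv riemannZeta (-1)).re := by
  have hlim := (((tendsto_log_factorial_sub.comp (tendsto_add_atTop_nat 1)).div_const 2).sub
    (tendsto_logHyperfactorial_sub.comp (tendsto_add_atTop_nat 1))).sub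
    (tendsto_log_nat_add_one_sub_log.div_const 3)
  have hint : ∫ x in (0 : ℝ)..1, x * Real.log (Real.Gamma x) =
      Real.log (2 * π) / 2 / 2 - (1 / 12 - (deriv riemannZeta (-1)).re) - 0 / 3 := by
    refine tendsto_nhds_unique tendsto_integral_mul_logGammaSeq (hlim.congr fun n => ?_)
    have hfact : Real.log (n + 1).factorial = Real.log (n + 1) + Real.log n.factorial := by
      rw [Nat.factorial_succ, Nat.cast_mul, Real.log_mul (by positivity) (by positivity),
        Nat.cast_add_one]
    rw [integral_mul_logGammaSeq, Function.comp_apply, Function.comp_apply, hfact]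
    push_cast
    ring
  rw [hint]
  ring

/-- The zeroth Fourier cosine coefficient of `x·log Γ(x)` on `(0,1)`:
`2·∫₀¹ x·log Γ(x) dx = (1/2)·log(2π/A⁴)` where `A = exp(1/12 − ζ′(−1))` is the
Glaisher–Kinkelin constant; equivalently
`∫₀¹ x·log Γ(x) dx = (1/4)·log(2π) − 1/12 + ζ′(−1)`. -/
theorem integral_x_mul_log_Gamma :
    (2 * ∫ x in (0:ℝ)..1, x * Real.log (Real.Gamma x) =
      (1 / 2) * Real.log (2 * π /
        (Real.exp (1 / 12 - (deriv riemannZeta (-1)).re)) ^ 4)) ∧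
    (∫ x in (0:ℝ)..1, x * Real.log (Real.Gamma x) =
      (1 / 4) * Real.log (2 * π) - 1 / 12 + (deriv riemannZeta (-1)).re) := by
  refine ⟨?_, integral_mul_log_Gamma⟩
  rw [integral_mul_log_Gamma, Real.log_div (by positivity) (by positivity), Real.log_pow,
    Real.log_exp]
  push_cast
  ring
end

section
/- For every positive integer n, the n-th Fourier cosine coefficient of x·log Γ(x) on (0,1) satisfies 2·∫₀¹ x·log Γ(x)·cos(2nπx) dx = 1/(4n) − C/(π²n²) − (log n)/(4π²n²) − T_n/π², where C = log(2π) + γ and T_n = ∑_{i=2, i≠n}^∞ (log i)/(i² − n²). -/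
open Real

open MeasureTheory Set Filter Topology
open scoped FourierTransform ComplexConjugate

/-!
Let `C = log (2π) + γ` and write `x = B₁(x) + 1/2` with `B₁` the first Bernoulli polynomial. The
Fourier coefficients of `B₁(x) cos(2πnx)` are purely imaginary, so pairing it with `log Γ` by
Parseval's identity only sees the imaginary parts `-(C + log k) / (2πk)` of the coefficients of
`log Γ`. Adding the pairing with `C B₁`, whose coefficients are `i C / (2πk)`, removes `C` from the
series; that pairing is elementary, since `∫₀¹ B₁(x)² cos(2πnx) dx = 1 / (2π²n²)`.

The coefficients of `log Γ` come from Gauss's limit formula for `Γ`, which unfolds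
`∫₀¹ log Γ(x) φ(x) dx`, for `φ` of period `1`, into the limit of `-∫₀ᴺ log(t) φ(t) dt` plus explicit
terms. Integrating by parts with `φ` the derivative of `exp(-2πikt)` leaves
`∫₀ᴺ (1 - exp(-2πit)) / t dt = log N + C + iπ/2 + o(1)`. This expansion follows on replacing `1/x`
by `π cot(πx)`: the difference is controlled by the Riemann–Lebesgue lemma, and
`π cot(πx) (1 - exp(-2πiMx))` is a trigonometric polynomial.
-/

/-! ### Fourier coefficients on an interval -/

theorem hasSum_conj_fourierCoeff_mul_fourierCoeff {T : ℝ} [hT : Fact (0 < T)]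
    (f g : Lp ℂ 2 (AddCircle.haarAddCircle (T := T))) :
    HasSum (fun k : ℤ ↦ conj (fourierCoeff f k) * fourierCoeff g k)
      (∫ t, conj (f t) * g t ∂AddCircle.haarAddCircle) := by
  have inner_eq_conj (k : ℤ) : inner ℂ f (fourierBasis k) = conj (fourierCoeff f k) := by
    rw [← inner_conj_symm, ← HilbertBasis.repr_apply_apply, fourierBasis_repr]
  have inner_eq_integral : inner ℂ f g = ∫ t, conj (f t) * g t ∂AddCircle.haarAddCircle := by
    simp only [L2.inner_def, RCLike.inner_apply']
  simpa only [← inner_eq_integral, inner_eq_conj, ← HilbertBasis.repr_apply_apply,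
    fourierBasis_repr] using fourierBasis.hasSum_inner_mul_inner f g

theorem fourierCoeffOn_ofReal_zero {a b : ℝ} (hab : a < b) (f : ℝ → ℝ) :
    fourierCoeffOn hab (fun x ↦ (f x : ℂ)) 0 = ((b - a)⁻¹ * ∫ x in a..b, f x : ℝ) := by
  simp [fourierCoeffOn_eq_integral, intervalIntegral.integral_ofReal]

theorem fourierCoeffOn_ofReal_neg {a b : ℝ} (hab : a < b) (f : ℝ → ℝ) (k : ℤ) :
    fourierCoeffOn hab (fun x ↦ (f x : ℂ)) (-k) =
      conj (fourierCoeffOn hab (fun x ↦ (f x : ℂ)) k) := by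
  simp only [fourierCoeffOn_eq_integral, Complex.real_smul, map_mul, Complex.conj_ofReal,
    intervalIntegral.integral_of_le hab.le, ← integral_conj, smul_eq_mul, neg_neg, fourier_neg,
    Complex.conj_conj]

theorem hasSum_conj_fourierCoeffOn_mul_fourierCoeffOn {a b : ℝ} {f g : ℝ → ℂ} (hab : a < b)
    (hf : MemLp f 2 (volume.restrict (Ioc a b))) (hg : MemLp g 2 (volume.restrict (Ioc a b))) :
    HasSum (fun k : ℤ ↦ conj (fourierCoeffOn hab f k) * fourierCoeffOn hab g k)
      ((b - a)⁻¹ • ∫ x in a..b, conj (f x) * g x) := by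
  have := Fact.mk (sub_pos.2 hab)
  rw [← add_sub_cancel a b] at hf hg
  have hf' := hf.memLp_liftIoc.haarAddCircle
  have hg' := hg.memLp_liftIoc.haarAddCircle
  convert! hasSum_conj_fourierCoeff_mul_fourierCoeff hf'.toLp hg'.toLp using 1
  · simp [fourierCoeff_congr_ae hf'.coeFn_toLp, fourierCoeff_congr_ae hg'.coeFn_toLp,
      fourierCoeff_liftIoc_eq]
  · nth_rw 2 [← add_sub_cancel a b]
    rw [← AddCircle.integral_liftIoc_eq_intervalIntegral, ← AddCircle.integral_haarAddCircle]
    refine integral_congr_ae ?_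
    filter_upwards [hf'.coeFn_toLp, hg'.coeFn_toLp] with x hfx hgx
    rw [hfx, hgx]
    rfl

theorem hasSum_re_conj_fourierCoeffOn_mul_fourierCoeffOn {a b : ℝ} {f g : ℝ → ℝ} (hab : a < b)
    (hf : MemLp f 2 (volume.restrict (Ioc a b))) (hg : MemLp g 2 (volume.restrict (Ioc a b)))
    (hf₀ : ∫ x in a..b, f x = 0) :
    HasSum (fun k : ℕ ↦ 2 * (conj (fourierCoeffOn hab (fun x ↦ (f x : ℂ)) k) *
      fourierCoeffOn hab (fun x ↦ (g x : ℂ)) k).re) ((b - a)⁻¹ * ∫ x in a..b, f x * g x) := by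
  have hzero : fourierCoeffOn hab (fun x ↦ (f x : ℂ)) 0 = 0 := by
    rw [fourierCoeffOn_ofReal_zero, hf₀, mul_zero, Complex.ofReal_zero]
  have hsum := (hasSum_conj_fourierCoeffOn_mul_fourierCoeffOn hab
    hf.ofReal hg.ofReal).nat_add_neg
  simp only [fourierCoeffOn_ofReal_neg, ← map_mul, Complex.add_conj, Complex.conj_ofReal,
    ← Complex.ofReal_mul, intervalIntegral.integral_ofReal, hzero, map_zero, zero_mul, add_zero,
    Complex.real_smul, RCLike.ofReal_eq_complex_ofReal] at hsum
  exact_mod_cast hsum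

theorem fourierCoeffOn_zero_one_eq_integral (f : ℝ → ℂ) (k : ℤ) :
    fourierCoeffOn zero_lt_one f k = ∫ x in (0 : ℝ)..1, 𝐞 (-(k * x)) • f x := by
  simp only [fourierCoeffOn_eq_integral, sub_zero, div_one, one_smul, fourier_coe_apply,
    Circle.smul_def, fourierChar_apply, smul_eq_mul]
  refine intervalIntegral.integral_congr fun x _ ↦ ?_
  congr 2
  push_cast
  ring

theorem cos_eq_fourierChar (n : ℤ) (x : ℝ) :
    (cos (2 * n * π * x) : ℂ) = (𝐞 (n * x) + 𝐞 (-(n * x))) / 2 := by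
  simp only [fourierChar_apply, Complex.ofReal_cos, Complex.cos]
  congr 3 <;> push_cast <;> ring

theorem fourierCoeffOn_mul_cos {f : ℝ → ℂ} (hf : IntervalIntegrable f volume 0 1) (n k : ℤ) :
    fourierCoeffOn zero_lt_one (fun x ↦ f x * cos (2 * n * π * x)) k =
      (fourierCoeffOn zero_lt_one f (k - n) + fourierCoeffOn zero_lt_one f (k + n)) / 2 := by
  have hint (m : ℤ) : IntervalIntegrable (fun x : ℝ ↦ 𝐞 (-(m * x)) • f x) volume 0 1 := by
    simp only [Circle.smul_def]
    exact hf.continuousOn_smul (by fun_prop)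
  simp only [fourierCoeffOn_zero_one_eq_integral]
  rw [← intervalIntegral.integral_add (hint _) (hint _), ← intervalIntegral.integral_div]
  refine intervalIntegral.integral_congr fun x _ ↦ ?_
  have h₁ : 𝐞 (-(((k - n : ℤ) : ℝ) * x)) = 𝐞 (-(k * x)) * 𝐞 (n * x) := by
    rw [← AddChar.map_add_eq_mul]; push_cast; ring_nf
  have h₂ : 𝐞 (-(((k + n : ℤ) : ℝ) * x)) = 𝐞 (-(k * x)) * 𝐞 (-(n * x)) := by
    rw [← AddChar.map_add_eq_mul]; push_cast; ring_nf
  simp only [h₁, h₂, cos_eq_fourierChar, Circle.smul_def, Circle.coe_mul, smul_eq_mul]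
  ring

theorem integral_mul_cos_eq_re_fourierCoeffOn (f : ℝ → ℝ)
    (hf : IntervalIntegrable f volume 0 1) (n : ℕ) :
    ∫ x in (0 : ℝ)..1, f x * cos (2 * n * π * x) =
      (fourierCoeffOn zero_lt_one (fun x ↦ (f x : ℂ)) n).re := by
  have h := fourierCoeffOn_mul_cos (f := fun x ↦ (f x : ℂ)) ⟨hf.1.ofReal, hf.2.ofReal⟩ n 0
  rw [zero_sub, zero_add, fourierCoeffOn_ofReal_neg, add_comm, Complex.add_conj] at h
  simp only [← Complex.ofReal_mul, fourierCoeffOn_ofReal_zero, Int.cast_natCast] at h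
  norm_cast at h
  simpa using h

theorem tendsto_intervalIntegral_fourierChar_smul_cocompact {E : Type*} [NormedAddCommGroup E]
    [NormedSpace ℂ E] (f : ℝ → E) (a b : ℝ) :
    Tendsto (fun w : ℝ ↦ ∫ x in a..b, 𝐞 (-(x * w)) • f x) (cocompact ℝ) (𝓝 0) := by
  have h := (Real.tendsto_integral_exp_smul_cocompact ((uIoc a b).indicator f)).const_smul
    (if a ≤ b then 1 else -1 : ℝ)
  rw [smul_zero] at h
  refine h.congr fun w ↦ ?_
  rw [intervalIntegral.intervalIntegral_eq_integral_uIoc, ← integral_indicator measurableSet_uIoc]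
  simp only [indicator_smul]

/-! ### The integral of `(1 - 𝐞 (-t)) / t` -/

theorem fourierChar_neg_natCast_mul (j : ℕ) (x : ℝ) :
    (𝐞 (-(j * x)) : ℂ) = (𝐞 (-x) : ℂ) ^ j := by
  rw [← mul_neg, ← nsmul_eq_mul, AddChar.map_nsmul_eq_pow, Circle.coe_pow]

theorem sin_pi_mul_pos {x : ℝ} (hx : x ∈ Ioo (0 : ℝ) 1) : 0 < sin (π * x) :=
  sin_pos_of_mem_Ioo ⟨mul_pos pi_pos hx.1, mul_lt_of_lt_one_right pi_pos hx.2⟩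

theorem hasDerivAt_log_sinc_pi_mul {x : ℝ} (hx : x ∈ Ioo (0 : ℝ) (1 / 2)) :
    HasDerivAt (fun x ↦ log (sinc (π * x))) (π * cot (π * x) - 1 / x) x := by
  have hπ := pi_pos
  have h0 : 0 < π * x := mul_pos hπ hx.1
  have hs := sin_pi_mul_pos ⟨hx.1, by linarith [hx.2]⟩
  have h1 : HasDerivAt (fun x ↦ log (sin (π * x)) - log (π * x))
      (cos (π * x) * (π * 1) / sin (π * x) - π * 1 / (π * x)) x :=
    (((hasDerivAt_id x).const_mul π).sin.log hs.ne').sub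
      (((hasDerivAt_id x).const_mul π).log h0.ne')
  have h2 : (fun x ↦ log (sinc (π * x))) =ᶠ[𝓝 x]
      fun x ↦ log (sin (π * x)) - log (π * x) := by
    filter_upwards [isOpen_Ioo.mem_nhds hx] with y hy
    have h0 : 0 < π * y := mul_pos hπ hy.1
    have hs := sin_pi_mul_pos ⟨hy.1, by linarith [hy.2]⟩
    rw [sinc_of_ne_zero h0.ne', log_div hs.ne' h0.ne']
  convert! h1.congr_of_eventuallyEq h2 using 1
  rw [cot_eq_cos_div_sin]
  have := hx.1.ne'
  field_simp

theorem continuousOn_log_sinc_pi_mul :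
    ContinuousOn (fun x ↦ log (sinc (π * x))) (Icc (0 : ℝ) (1 / 2)) := by
  refine (continuous_sinc.comp (continuous_const.mul continuous_id)).continuousOn.log fun x hx ↦ ?_
  rcases hx.1.eq_or_lt with rfl | h
  · simp
  · have h0 : 0 < π * x := mul_pos pi_pos h
    have hs := sin_pi_mul_pos ⟨h, by linarith [hx.2]⟩
    change sinc (π * x) ≠ 0
    rw [sinc_of_ne_zero h0.ne']
    positivity

theorem intervalIntegrable_pi_mul_cot_sub_inv :
    IntervalIntegrable (fun x ↦ π * cot (π * x) - 1 / x) volume 0 (1 / 2) := by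
  suffices h : IntegrableOn (fun x ↦ -(π * cot (π * x) - 1 / x)) (Ioc 0 (1 / 2)) by
    rw [intervalIntegrable_iff_integrableOn_Ioc_of_le (by norm_num)]
    exact h.neg.congr_fun (fun x _ ↦ neg_neg _) measurableSet_Ioc
  refine intervalIntegral.integrableOn_deriv_of_nonneg continuousOn_log_sinc_pi_mul.neg
    (fun x hx ↦ (hasDerivAt_log_sinc_pi_mul hx).neg) fun x hx ↦ ?_
  have h0 : 0 < π * x := mul_pos pi_pos hx.1
  have h1 : π * x < π / 2 := by nlinarith [hx.2, pi_pos]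
  have ht := Real.lt_tan h0 h1
  have hx0 := hx.1
  rw [← Real.tan_inv_eq_cot, neg_nonneg, sub_nonpos]
  calc π * (tan (π * x))⁻¹ ≤ π * (π * x)⁻¹ := by gcongr
    _ = 1 / x := by field_simp

theorem integral_pi_mul_cot_sub_inv :
    ∫ x in (0 : ℝ)..1 / 2, (π * cot (π * x) - 1 / x) = log 2 - log π := by
  rw [intervalIntegral.integral_eq_sub_of_hasDerivAt_of_le (by norm_num)
    continuousOn_log_sinc_pi_mul (fun x hx ↦ hasDerivAt_log_sinc_pi_mul hx)
    intervalIntegrable_pi_mul_cot_sub_inv]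
  have : π * (1 / 2) ≠ 0 := by positivity
  rw [sinc_of_ne_zero this, mul_zero, sinc_zero, mul_one_div, sin_pi_div_two, one_div_div,
    log_div two_ne_zero pi_ne_zero]
  simp

theorem one_sub_fourierChar_mul_pi_mul_cot {x : ℝ} (hx : sin (π * x) ≠ 0) :
    (1 - 𝐞 (-x) : ℂ) * (π * cot (π * x) : ℝ) = π * Complex.I * (1 + 𝐞 (-x)) := by
  have hz : (𝐞 (-x) : ℂ) = 1 - 2 * sin (π * x) ^ 2 - 2 * sin (π * x) * cos (π * x) * Complex.I := by
    rw [fourierChar_apply, mul_neg, Complex.ofReal_neg, neg_mul, ← mul_neg, ← neg_mul_comm,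
      Complex.exp_mul_I, ← Complex.ofReal_neg, ← Complex.ofReal_cos, ← Complex.ofReal_sin,
      cos_neg, sin_neg, mul_assoc, cos_two_mul, sin_two_mul, cos_sq']
    push_cast
    ring
  have hsq : (sin (π * x) ^ 2 + cos (π * x) ^ 2 : ℂ) = 1 := mod_cast sin_sq_add_cos_sq (π * x)
  rw [hz, cot_eq_cos_div_sin, Complex.ofReal_mul, Complex.ofReal_div]
  generalize sin (π * x) = s, cos (π * x) = c at *
  have hs : (s : ℂ) ≠ 0 := mod_cast hx
  field_simp
  linear_combination 2 * s * Complex.I * hsq + 2 * s ^ 2 * c * Complex.I_sq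

theorem fourierChar_neg_one : 𝐞 (-1) = 1 := by
  rw [AddChar.map_neg_eq_inv, inv_eq_one, ← Circle.coe_eq_one, fourierChar_apply]
  simp

theorem periodic_fourierChar_neg_natCast_mul (k : ℕ) :
    Function.Periodic (fun x : ℝ ↦ (𝐞 (-(k * x)) : ℂ)) 1 := fun x ↦ by
  simp only [fourierChar_neg_natCast_mul, neg_add, AddChar.map_add_eq_mul, fourierChar_neg_one,
    mul_one]

theorem hasDerivAt_fourierChar_neg_natCast_mul (k : ℕ) (x : ℝ) :
    HasDerivAt (fun x : ℝ ↦ (𝐞 (-(k * x)) : ℂ)) (-(2 * π * Complex.I * k) * 𝐞 (-(k * x))) x := by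
  convert! (hasDerivAt_fourierChar (-(k * x))).scomp x
    ((hasDerivAt_id' x).const_mul (k : ℝ)).fun_neg using 1
  simp only [neg_mul, mul_one, neg_smul, Complex.real_smul, Complex.ofReal_natCast]
  ring

theorem integral_fourierChar_neg_natCast_mul {k : ℕ} (hk : k ≠ 0) (a b : ℝ) :
    ∫ x in a..b, (𝐞 (-(k * x)) : ℂ) =
      (𝐞 (-(k * a)) - 𝐞 (-(k * b))) / (2 * π * Complex.I * k) := by
  have hc : -(2 * π * Complex.I * k) ≠ 0 := by simp [hk]
  have h := intervalIntegral.integral_eq_sub_of_hasDerivAt (a := a) (b := b)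
    (fun x _ ↦ hasDerivAt_fourierChar_neg_natCast_mul k x)
    (Continuous.intervalIntegrable (by fun_prop) _ _)
  rw [intervalIntegral.integral_const_mul, mul_comm, ← eq_div_iff hc] at h
  rw [h, div_neg, ← neg_div, neg_sub]

theorem fourierChar_neg_half : (𝐞 (-(1 / 2)) : ℂ) = -1 := by
  rw [fourierChar_apply, ← Complex.exp_neg_pi_mul_I]
  push_cast
  ring_nf

theorem integral_fourierChar_zero_half {j : ℕ} (hj : j ≠ 0) :
    ∫ x in (0 : ℝ)..1 / 2, (𝐞 (-(j * x)) : ℂ) = (1 - (-1) ^ j) / (2 * π * Complex.I * j) := by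
  rw [integral_fourierChar_neg_natCast_mul hj]
  simp only [fourierChar_neg_natCast_mul, fourierChar_neg_half, neg_zero, AddChar.map_zero_eq_one,
    Circle.coe_one, one_pow]

theorem integral_fourierChar_zero_half_of_even {j : ℕ} (hj : j ≠ 0) (h : Even j) :
    ∫ x in (0 : ℝ)..1 / 2, (𝐞 (-(j * x)) : ℂ) = 0 := by
  rw [integral_fourierChar_zero_half hj, h.neg_one_pow, sub_self, zero_div]

theorem integral_fourierChar_zero_half_of_odd {j : ℕ} (h : Odd j) :
    ∫ x in (0 : ℝ)..1 / 2, (𝐞 (-(j * x)) : ℂ) = 1 / (π * Complex.I * j) := by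
  rw [integral_fourierChar_zero_half h.pos.ne', h.neg_one_pow, sub_neg_eq_add, one_add_one_eq_two,
    mul_assoc 2, mul_assoc 2, div_mul_cancel_left₀ two_ne_zero, one_div, mul_assoc]

theorem one_sub_fourierChar_natCast_mul_mul_pi_mul_cot (M : ℕ) {x : ℝ} (hx : sin (π * x) ≠ 0) :
    (1 - 𝐞 (-(M * x)) : ℂ) * (π * cot (π * x) : ℝ) = π * Complex.I *
      ∑ j ∈ Finset.range M, ((𝐞 (-(j * x)) : ℂ) + 𝐞 (-((j + 1 : ℕ) * x))) := by
  simp only [fourierChar_neg_natCast_mul, pow_succ, ← mul_one_add, ← Finset.sum_mul]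
  rw [← geom_sum_mul_neg, mul_assoc, one_sub_fourierChar_mul_pi_mul_cot hx]
  ring

theorem eqOn_one_sub_fourierChar_mul_pi_mul_cot (M : ℕ) :
    EqOn (fun x : ℝ ↦ π * Complex.I *
        ∑ j ∈ Finset.range M, ((𝐞 (-(j * x)) : ℂ) + 𝐞 (-((j + 1 : ℕ) * x))))
      (fun x ↦ (1 - 𝐞 (-(M * x)) : ℂ) * (π * cot (π * x) : ℝ)) (uIoc 0 (1 / 2)) := by
  rw [uIoc_of_le (by norm_num)]
  exact fun x hx ↦ (one_sub_fourierChar_natCast_mul_mul_pi_mul_cot M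
    (sin_pi_mul_pos ⟨hx.1, by linarith [hx.2]⟩).ne').symm

theorem intervalIntegrable_one_sub_fourierChar_mul_pi_mul_cot (M : ℕ) :
    IntervalIntegrable (fun x : ℝ ↦ (1 - 𝐞 (-(M * x)) : ℂ) * (π * cot (π * x) : ℝ))
      volume 0 (1 / 2) :=
  (Continuous.intervalIntegrable (by fun_prop) _ _).congr
    (eqOn_one_sub_fourierChar_mul_pi_mul_cot M)

theorem integral_one_sub_fourierChar_mul_pi_mul_cot_eq_sum (M : ℕ) :
    ∫ x in (0 : ℝ)..1 / 2, (1 - 𝐞 (-(M * x)) : ℂ) * (π * cot (π * x) : ℝ) =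
      π * Complex.I * ∑ j ∈ Finset.range M, ((∫ x in (0 : ℝ)..1 / 2, (𝐞 (-(j * x)) : ℂ)) +
        ∫ x in (0 : ℝ)..1 / 2, (𝐞 (-((j + 1 : ℕ) * x)) : ℂ)) := by
  have hint (j : ℕ) : IntervalIntegrable (fun x : ℝ ↦ (𝐞 (-(j * x)) : ℂ)) volume 0 (1 / 2) :=
    Continuous.intervalIntegrable (by fun_prop) _ _
  rw [← intervalIntegral.integral_congr_ae
    (.of_forall (eqOn_one_sub_fourierChar_mul_pi_mul_cot M)),
    intervalIntegral.integral_const_mul,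
    intervalIntegral.integral_finsetSum fun j _ ↦ (hint j).add (hint (j + 1))]
  simp only [intervalIntegral.integral_add (hint _) (hint _)]

theorem integral_one_sub_fourierChar_mul_pi_mul_cot {N : ℕ} (hN : N ≠ 0) :
    ∫ x in (0 : ℝ)..1 / 2, (1 - 𝐞 (-((2 * N : ℕ) * x)) : ℂ) * (π * cot (π * x) : ℝ) =
      2 * harmonic (2 * N) - harmonic N + π / 2 * Complex.I := by
  have hpi : (π : ℂ) ≠ 0 := mod_cast pi_ne_zero
  rw [integral_one_sub_fourierChar_mul_pi_mul_cot_eq_sum]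
  induction N, Nat.one_le_iff_ne_zero.2 hN using Nat.le_induction with
  | base =>
    have h₀ : ∫ x in (0 : ℝ)..1 / 2, (𝐞 (-((0 : ℕ) * x)) : ℂ) = 1 / 2 := by simp
    rw [mul_one, Finset.sum_range_succ, Finset.sum_range_one, h₀,
      integral_fourierChar_zero_half_of_odd (by decide),
      integral_fourierChar_zero_half_of_even (by decide) (by decide), harmonic_succ, harmonic_succ,
      harmonic_zero]
    push_cast
    field_simp
    ring
  | succ N hN ih =>
    have hN₀ : N ≠ 0 := by omega
    have h₁ : (2 * N + 1 : ℂ) ≠ 0 := mod_cast (2 * N).succ_ne_zero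
    have h₂ : (N + 1 : ℂ) ≠ 0 := mod_cast N.succ_ne_zero
    have h₃ : (2 * N + 1 + 1 : ℂ) ≠ 0 := mod_cast (2 * N + 1).succ_ne_zero
    rw [mul_add_one, Finset.sum_range_succ, Finset.sum_range_succ, mul_add, mul_add, ih hN₀,
      integral_fourierChar_zero_half_of_even (by omega) (even_two_mul N),
      integral_fourierChar_zero_half_of_odd (odd_two_mul_add_one N),
      integral_fourierChar_zero_half_of_even (by omega) (by grind), harmonic_succ, harmonic_succ,
      harmonic_succ]
    push_cast
    field_simp
    ring

theorem integral_comp_mul_left_div {s : ℝ} (hs : s ≠ 0) (f : ℝ → ℂ) (a b : ℝ) :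
    ∫ x in a..b, f (s * x) / x = ∫ x in s * a..s * b, f x / x := by
  have hs' : (s : ℂ) ≠ 0 := mod_cast hs
  rw [← intervalIntegral.smul_integral_comp_mul_left, ← intervalIntegral.integral_smul]
  refine intervalIntegral.integral_congr fun x _ ↦ ?_
  simp only [Complex.real_smul, Complex.ofReal_mul]
  field_simp

theorem tendsto_two_mul_harmonic_sub_harmonic_sub_log :
    Tendsto (fun N : ℕ ↦ (2 * harmonic (2 * N) - harmonic N - log N : ℝ)) atTop
      (𝓝 (2 * log 2 + eulerMascheroniConstant)) := by
  have h2N := tendsto_harmonic_sub_log.comp (tendsto_id.const_mul_atTop' (zero_lt_two' ℕ))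
  have h := ((h2N.const_mul 2).sub tendsto_harmonic_sub_log).const_add (2 * log 2)
  rw [two_mul eulerMascheroniConstant, add_sub_cancel_right] at h
  refine h.congr' ?_
  filter_upwards [eventually_ne_atTop 0] with N hN
  have hN' : (N : ℝ) ≠ 0 := mod_cast hN
  simp only [Function.comp_apply, id_eq, Nat.cast_mul, Nat.cast_ofNat,
    log_mul two_ne_zero hN']
  ring

theorem integral_one_sub_fourierChar_div {N : ℕ} (hN : N ≠ 0) :
    ∫ t in (0 : ℝ)..N, (1 - 𝐞 (-t) : ℂ) / t =
      2 * harmonic (2 * N) - harmonic N + π / 2 * Complex.I - (log 2 - log π) +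
        ∫ x in (0 : ℝ)..1 / 2, 𝐞 (-(x * (2 * N))) • ((π * cot (π * x) - 1 / x : ℝ) : ℂ) := by
  have hf : IntervalIntegrable (fun x ↦ ((π * cot (π * x) - 1 / x : ℝ) : ℂ)) volume 0 (1 / 2) :=
    ⟨intervalIntegrable_pi_mul_cot_sub_inv.1.ofReal,
      intervalIntegrable_pi_mul_cot_sub_inv.2.ofReal⟩
  have hef : IntervalIntegrable
      (fun x : ℝ ↦ 𝐞 (-(x * (2 * N))) • ((π * cot (π * x) - 1 / x : ℝ) : ℂ))
      volume 0 (1 / 2) := by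
    simp only [Circle.smul_def]
    exact hf.continuousOn_smul (by fun_prop)
  have hN₂ : (2 * N : ℝ) ≠ 0 := mod_cast mul_ne_zero two_ne_zero hN
  have hscale := integral_comp_mul_left_div hN₂ (fun t ↦ 1 - 𝐞 (-t)) 0 (1 / 2)
  rw [mul_zero, mul_one_div, mul_div_cancel_left₀ _ two_ne_zero] at hscale
  have hcot := integral_one_sub_fourierChar_mul_pi_mul_cot hN
  have hint := intervalIntegrable_one_sub_fourierChar_mul_pi_mul_cot (2 * N)
  have hconst : ∫ x in (0 : ℝ)..1 / 2, ((π * cot (π * x) - 1 / x : ℝ) : ℂ) = log 2 - log π := by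
    rw [intervalIntegral.integral_ofReal, integral_pi_mul_cot_sub_inv, Complex.ofReal_sub]
  rw [← hscale, ← hcot, ← hconst, ← intervalIntegral.integral_sub hint hf,
    ← intervalIntegral.integral_add (hint.sub hf) hef]
  refine intervalIntegral.integral_congr fun x _ ↦ ?_
  simp only [Circle.smul_def, smul_eq_mul, mul_comm x]
  push_cast
  ring

theorem tendsto_integral_one_sub_fourierChar_div_sub_log :
    Tendsto (fun N : ℕ ↦ (∫ t in (0 : ℝ)..N, (1 - 𝐞 (-t) : ℂ) / t) - log N) atTop
      (𝓝 ((log (2 * π) + eulerMascheroniConstant : ℝ) + π / 2 * Complex.I)) := by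
  have hlim := (tendsto_two_mul_harmonic_sub_harmonic_sub_log.ofReal).add
    ((tendsto_intervalIntegral_fourierChar_smul_cocompact
      (fun x ↦ ((π * cot (π * x) - 1 / x : ℝ) : ℂ)) 0 (1 / 2)).comp
      (tendsto_natCast_atTop_atTop (R := ℝ) |>.const_mul_atTop (zero_lt_two' ℝ) |>.mono_right
        atTop_le_cocompact)) |>.add_const (π / 2 * Complex.I - (log 2 - log π))
  rw [log_mul two_ne_zero pi_ne_zero]
  convert hlim.congr' ?_ using 2
  · push_cast
    ring
  filter_upwards [eventually_ne_atTop 0] with N hN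
  rw [integral_one_sub_fourierChar_div hN]
  simp only [Function.comp_apply]
  push_cast
  ring

/-! ### Fourier coefficients of `log Γ` -/

section LogDerivative

variable {E : Type*} [NormedAddCommGroup E] [NormedSpace ℝ E] {f f' : ℝ → E}

theorem continuous_dslope_of_hasDerivAt (hf : ∀ x, HasDerivAt f (f' x) x) (a : ℝ) :
    Continuous (dslope f a) :=
  continuousOn_univ.1 <| (continuousOn_dslope univ_mem).2
    ⟨fun x _ ↦ (hf x).continuousAt.continuousWithinAt, (hf a).differentiableAt⟩

theorem integral_log_smul_deriv [CompleteSpace E] (hf : ∀ x, HasDerivAt f (f' x) x)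
    (hf' : Continuous f') {b : ℝ} (hb : 0 ≤ b) :
    ∫ t in (0 : ℝ)..b, log t • f' t =
      log b • (f b - f 0) - ∫ t in (0 : ℝ)..b, slope f 0 t := by
  have hslope : IntervalIntegrable (slope f 0) volume 0 b := by
    refine ((continuous_dslope_of_hasDerivAt hf 0).intervalIntegrable 0 b).congr_ae
      (ae_restrict_of_ae ?_)
    filter_upwards [Measure.ae_ne volume (0 : ℝ)] with t ht
    exact dslope_of_ne f ht
  have hlog : IntervalIntegrable (fun t ↦ log t • f' t) volume 0 b :=
    intervalIntegral.intervalIntegrable_log'.smul_continuousOn hf'.continuousOn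
  have hcont : Continuous fun t ↦ log t • (f t - f 0) := by
    have h (t : ℝ) : log t • (f t - f 0) = (t * log t) • dslope f 0 t := by
      rw [← sub_smul_dslope, sub_zero, smul_smul, mul_comm]
    simp only [h]
    exact continuous_mul_log.smul (continuous_dslope_of_hasDerivAt hf 0)
  have hderiv : ∀ t ∈ Ioo 0 b, HasDerivAt (fun t ↦ log t • (f t - f 0))
      (log t • f' t + slope f 0 t) t := fun t ht ↦ by
    simpa [slope_def_module] using (hasDerivAt_log ht.1.ne').fun_smul ((hf t).sub_const (f 0))
  rw [eq_sub_iff_add_eq, ← intervalIntegral.integral_add hlog hslope,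
    intervalIntegral.integral_eq_sub_of_hasDerivAt_of_le hb hcont.continuousOn hderiv
      (hlog.add hslope), log_zero, zero_smul, sub_zero]

end LogDerivative

theorem memLp_two_log : MemLp log 2 (volume.restrict (Ioc (0 : ℝ) 1)) := by
  rw [memLp_two_iff_integrable_sq measurable_log.aestronglyMeasurable]
  have hint : IntegrableOn (fun x : ℝ ↦ 16 * x ^ (-1 / 2 : ℝ)) (Ioc 0 1) :=
    ((intervalIntegrable_iff_integrableOn_Ioc_of_le zero_le_one).1
      (intervalIntegral.intervalIntegrable_rpow' (by norm_num))).const_mul 16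
  refine hint.mono' (measurable_log.pow_const 2).aestronglyMeasurable ?_
  filter_upwards [ae_restrict_mem measurableSet_Ioc] with x hx
  have hlog : |log x * x ^ (1 / 4 : ℝ)| < 4 := by
    simpa using abs_log_mul_self_rpow_lt x (1 / 4) hx.1 hx.2 (by norm_num)
  calc ‖log x ^ 2‖ = |log x * x ^ (1 / 4 : ℝ)| ^ 2 * x ^ (-1 / 2 : ℝ) := by
        rw [sq_abs, mul_pow, ← rpow_mul_natCast hx.1.le, mul_assoc, ← rpow_add hx.1]
        norm_num
    _ ≤ 4 ^ 2 * x ^ (-1 / 2 : ℝ) := by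
        have := rpow_nonneg hx.1.le (-1 / 2)
        gcongr
    _ = 16 * x ^ (-1 / 2 : ℝ) := by norm_num

theorem memLp_Ioc_of_continuousOn {E : Type*} [NormedAddCommGroup E] {f : ℝ → E} {a b : ℝ}
    (hf : ContinuousOn f (Icc a b)) (p : ENNReal) : MemLp f p (volume.restrict (Ioc a b)) := by
  obtain ⟨B, hB⟩ := isCompact_Icc.exists_bound_of_continuousOn hf
  exact MemLp.of_bound
    ((hf.aestronglyMeasurable measurableSet_Icc).mono_set Ioc_subset_Icc_self) B
    ((ae_restrict_mem measurableSet_Ioc).mono fun x hx ↦ hB x (Ioc_subset_Icc_self hx))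

theorem log_Gamma_add_one {x : ℝ} (hx : 0 < x) : log (Gamma (x + 1)) = log (Gamma x) + log x := by
  rw [Gamma_add_one hx.ne', log_mul hx.ne' (Gamma_pos_of_pos hx).ne', add_comm]

theorem memLp_two_log_Gamma :
    MemLp (fun x ↦ log (Gamma x)) 2 (volume.restrict (Ioc (0 : ℝ) 1)) := by
  have hcont : ContinuousOn (fun x : ℝ ↦ log (Gamma (x + 1))) (Icc 0 1) :=
    ContinuousOn.log (differentiableOn_Gamma_Ioi.continuousOn.comp (by fun_prop)
      fun x hx ↦ add_pos_of_nonneg_of_pos hx.1 one_pos)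
      fun x hx ↦ (Gamma_pos_of_pos (add_pos_of_nonneg_of_pos hx.1 one_pos)).ne'
  refine ((memLp_Ioc_of_continuousOn hcont 2).sub memLp_two_log).ae_eq ?_
  filter_upwards [ae_restrict_mem measurableSet_Ioc] with x hx
  rw [Pi.sub_apply, log_Gamma_add_one hx.1, add_sub_cancel_right]

theorem intervalIntegrable_log_Gamma :
    IntervalIntegrable (fun x ↦ log (Gamma x)) volume 0 1 := by
  rw [intervalIntegrable_iff_integrableOn_Ioc_of_le zero_le_one]
  exact memLp_two_log_Gamma.integrable (by norm_num)

theorem abs_logGammaSeq_sub_log_Gamma_le_s3 {x : ℝ} (hx : x ∈ Ioc (0 : ℝ) 1) {N : ℕ} (hN : N ≠ 0) :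
    |BohrMollerup.logGammaSeq x N - log (Gamma x)| ≤ log 2 := by
  have hfeq : ∀ {y : ℝ}, 0 < y → (log ∘ Gamma) (y + 1) = (log ∘ Gamma) y + log y :=
    log_Gamma_add_one
  have hge := BohrMollerup.ge_logGammaSeq convexOn_log_Gamma hfeq hx.1 hN
  have hle := BohrMollerup.le_logGammaSeq convexOn_log_Gamma hfeq hx.1 hx.2 N
  simp only [Function.comp_apply, Gamma_one, log_one, zero_add] at hge hle
  have hN' : (1 : ℝ) ≤ N := mod_cast Nat.one_le_iff_ne_zero.2 hN
  have hlog_le : log (N + 1) ≤ log 2 + log N := by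
    rw [← log_mul two_ne_zero (by positivity)]
    exact log_le_log (by positivity) (by linarith)
  have hlog_ge : log N ≤ log (N + 1) := log_le_log (by positivity) (by linarith)
  rw [abs_le]
  constructor <;> nlinarith [hx.1, hx.2]

section LogGammaIntegral

variable {E : Type*} [NormedAddCommGroup E] [NormedSpace ℝ E] {φ : ℝ → E}

theorem tendsto_integral_logGammaSeq_smul (hφ : Continuous φ) :
    Tendsto (fun N ↦ ∫ x in (0 : ℝ)..1, BohrMollerup.logGammaSeq x N • φ x) atTop
      (𝓝 (∫ x in (0 : ℝ)..1, log (Gamma x) • φ x)) := by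
  refine intervalIntegral.tendsto_integral_filter_of_dominated_convergence
    (fun x ↦ (log 2 + |log (Gamma x)|) * ‖φ x‖) (.of_forall fun N ↦ ?_) ?_ ?_ ?_
  · have hmeas : Measurable fun x ↦ BohrMollerup.logGammaSeq x N := by
      unfold BohrMollerup.logGammaSeq
      fun_prop
    exact hmeas.aestronglyMeasurable.smul hφ.aestronglyMeasurable
  · filter_upwards [eventually_ne_atTop 0] with N hN
    refine .of_forall fun x hx ↦ ?_
    rw [uIoc_of_le zero_le_one] at hx
    rw [norm_smul, norm_eq_abs]
    gcongr
    linarith [abs_logGammaSeq_sub_log_Gamma_le_s3 hx hN,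
      abs_sub_abs_le_abs_sub (BohrMollerup.logGammaSeq x N) (log (Gamma x))]
  · exact (intervalIntegrable_const.add intervalIntegrable_log_Gamma.abs).mul_continuousOn
      (by fun_prop)
  · refine .of_forall fun x hx ↦ ?_
    rw [uIoc_of_le zero_le_one] at hx
    exact (BohrMollerup.tendsto_log_gamma hx.1).smul_const _

theorem integral_logGammaSeq_smul (hφ : Continuous φ) (hp : Function.Periodic φ 1) (N : ℕ) :
    ∫ x in (0 : ℝ)..1, BohrMollerup.logGammaSeq x N • φ x =
      log N • (∫ x in (0 : ℝ)..1, x • φ x) + log N.factorial • (∫ x in (0 : ℝ)..1, φ x) -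
        ∫ t in (0 : ℝ)..(N + 1 : ℕ), log t • φ t := by
  have hlog (b c : ℝ) : IntervalIntegrable (fun t ↦ log t • φ t) volume b c :=
    intervalIntegral.intervalIntegrable_log'.smul_continuousOn hφ.continuousOn
  have hterm (m : ℕ) (x : ℝ) : log (x + m) • φ x = log (x + m) • φ (x + m) := by
    rw [← mul_one (m : ℝ), hp.nat_mul m x]
  have hint (m : ℕ) : IntervalIntegrable (fun x ↦ log (x + m) • φ x) volume 0 1 := by
    simp only [hterm]
    simpa using (hlog m (1 + m)).comp_add_right (m : ℝ)
  have hsum : ∑ m ∈ Finset.range (N + 1), ∫ x in (0 : ℝ)..1, log (x + m) • φ x =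
      ∫ t in (0 : ℝ)..(N + 1 : ℕ), log t • φ t := by
    rw [← Nat.cast_zero, ← intervalIntegral.sum_integral_adjacent_intervals
      (a := fun m : ℕ ↦ (m : ℝ)) fun m _ ↦ hlog m (m + 1 : ℕ)]
    refine Finset.sum_congr rfl fun m _ ↦ ?_
    simp only [hterm]
    rw [intervalIntegral.integral_comp_add_right fun t ↦ log t • φ t]
    simp [add_comm]
  have hx : IntervalIntegrable (fun x ↦ log N • x • φ x) volume 0 1 :=
    Continuous.intervalIntegrable (by fun_prop) _ _
  have hc : IntervalIntegrable (fun x ↦ log N.factorial • φ x) volume 0 1 :=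
    Continuous.intervalIntegrable (by fun_prop) _ _
  have hs : IntervalIntegrable (fun x ↦ ∑ m ∈ Finset.range (N + 1), log (x + m) • φ x)
      volume 0 1 := by
    simpa only [Finset.sum_fn] using IntervalIntegrable.sum (Finset.range (N + 1)) fun m _ ↦ hint m
  rw [← hsum, ← intervalIntegral.integral_finsetSum fun m _ ↦ hint m,
    ← intervalIntegral.integral_smul, ← intervalIntegral.integral_smul,
    ← intervalIntegral.integral_add hx hc, ← intervalIntegral.integral_sub (hx.add hc) hs]
  refine intervalIntegral.integral_congr fun x _ ↦ ?_
  simp only [BohrMollerup.logGammaSeq, sub_smul, add_smul, Finset.sum_smul, mul_smul,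
    smul_comm x]

theorem tendsto_integral_slope_add_log_smul [CompleteSpace E] {f f' : ℝ → E}
    (hf : ∀ x, HasDerivAt f (f' x) x) (hf' : Continuous f') (hp : Function.Periodic f 1) :
    Tendsto (fun N : ℕ ↦ (∫ t in (0 : ℝ)..(N + 1 : ℕ), slope f 0 t) +
      log N • (f 0 - ∫ x in (0 : ℝ)..1, f x)) atTop
      (𝓝 (∫ x in (0 : ℝ)..1, log (Gamma x) • f' x)) := by
  have hp' : Function.Periodic f' 1 := fun x ↦
    ((hf (x + 1)).comp_add_const x 1).unique (by simpa only [hp _] using hf x)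
  have hone : f 1 = f 0 := by simpa using hp 0
  have hzero : ∫ x in (0 : ℝ)..1, f' x = 0 := by
    rw [intervalIntegral.integral_eq_sub_of_hasDerivAt (fun x _ ↦ hf x)
      (hf'.intervalIntegrable _ _), hone, sub_self]
  have hparts : ∫ x in (0 : ℝ)..1, x • f' x = f 0 - ∫ x in (0 : ℝ)..1, f x := by
    rw [intervalIntegral.integral_smul_deriv_eq_deriv_smul (u' := fun _ ↦ 1)
      (fun x _ ↦ hasDerivAt_id' x) (fun x _ ↦ hf x) intervalIntegrable_const
      (hf'.intervalIntegrable _ _)]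
    simp [hone]
  refine (tendsto_integral_logGammaSeq_smul hf').congr fun N ↦ ?_
  have hN : f (N + 1 : ℕ) = f 0 := by simpa using hp.nat_mul_eq (N + 1)
  rw [integral_logGammaSeq_smul hf' hp', hparts, hzero,
    integral_log_smul_deriv hf hf' (Nat.cast_nonneg _), hN, sub_self,
    smul_zero, smul_zero, add_zero, zero_sub, sub_neg_eq_add, add_comm]

end LogGammaIntegral

theorem integral_slope_fourierChar_neg_natCast_mul {k : ℕ} (hk : k ≠ 0) (N : ℕ) :
    ∫ t in (0 : ℝ)..N, slope (fun x : ℝ ↦ (𝐞 (-(k * x)) : ℂ)) 0 t =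
      -∫ t in (0 : ℝ)..(k * N : ℕ), (1 - 𝐞 (-t) : ℂ) / t := by
  have hscale := integral_comp_mul_left_div (Nat.cast_ne_zero.2 hk) (fun t ↦ 1 - 𝐞 (-t)) 0 N
  rw [mul_zero, ← Nat.cast_mul] at hscale
  rw [← hscale, ← intervalIntegral.integral_neg]
  refine intervalIntegral.integral_congr fun x _ ↦ ?_
  simp [slope_def_module, div_eq_inv_mul, ← mul_neg]

theorem integral_log_Gamma_smul_deriv_fourierChar {k : ℕ} (hk : k ≠ 0) :
    ∫ x in (0 : ℝ)..1, log (Gamma x) • (-(2 * π * Complex.I * k) * (𝐞 (-(k * x)) : ℂ)) =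
      -((log (2 * π) + eulerMascheroniConstant + log k : ℝ) + π / 2 * Complex.I) := by
  have hzero : ∫ x in (0 : ℝ)..1, (𝐞 (-(k * x)) : ℂ) = 0 := by
    have hone : (𝐞 (-(k * 1)) : ℂ) = 𝐞 (-(k * 0)) := by
      simpa using periodic_fourierChar_neg_natCast_mul k 0
    rw [integral_fourierChar_neg_natCast_mul hk, hone, sub_self, zero_div]
  have hlim := (((tendsto_integral_one_sub_fourierChar_div_sub_log.comp
    ((tendsto_add_atTop_nat 1).const_mul_atTop' (Nat.pos_of_ne_zero hk))).add
      tendsto_log_nat_add_one_sub_log.ofReal).add_const (log k : ℂ)).neg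
  refine tendsto_nhds_unique (tendsto_integral_slope_add_log_smul
    (hasDerivAt_fourierChar_neg_natCast_mul k) (by fun_prop)
    (periodic_fourierChar_neg_natCast_mul k)) ?_
  convert hlim.congr fun N ↦ ?_ using 2
  · push_cast
    ring
  · have hlog : log (k * (N + 1) : ℕ) = log k + log (N + 1) := by
      rw [Nat.cast_mul, Nat.cast_succ, log_mul (mod_cast hk) (mod_cast N.succ_ne_zero)]
    simp only [Function.comp_apply, integral_slope_fourierChar_neg_natCast_mul hk, hzero, hlog,
      mul_zero, neg_zero, AddChar.map_zero_eq_one, Circle.coe_one, sub_zero, Complex.real_smul,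
      Complex.ofReal_add, Complex.ofReal_sub]
    ring

theorem fourierCoeffOn_log_Gamma {k : ℕ} (hk : k ≠ 0) :
    fourierCoeffOn zero_lt_one (fun x ↦ (log (Gamma x) : ℂ)) k =
      (1 / (4 * k) : ℝ) -
        ((log (2 * π) + eulerMascheroniConstant + log k) / (2 * π * k) : ℝ) * Complex.I := by
  have hk' : (k : ℂ) ≠ 0 := mod_cast hk
  have hπ : (π : ℂ) ≠ 0 := mod_cast pi_ne_zero
  have h : -(2 * π * Complex.I * k) * fourierCoeffOn zero_lt_one (fun x ↦ (log (Gamma x) : ℂ)) k =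
      -((log (2 * π) + eulerMascheroniConstant + log k : ℝ) + π / 2 * Complex.I) := by
    rw [fourierCoeffOn_zero_one_eq_integral, ← integral_log_Gamma_smul_deriv_fourierChar hk,
      ← intervalIntegral.integral_const_mul]
    refine intervalIntegral.integral_congr fun x _ ↦ ?_
    simp only [Circle.smul_def, smul_eq_mul, Complex.real_smul, Int.cast_natCast]
    ring
  push_cast at h ⊢
  field_simp
  linear_combination 4 * Complex.I * h + (8 * π * k *
    fourierCoeffOn zero_lt_one (fun x ↦ (log (Gamma x) : ℂ)) k - 2 * π) * Complex.I_sq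

/-! ### Pairing with the Bernoulli polynomial -/

theorem fourierCoeffOn_bernoulliFun_one (k : ℤ) :
    fourierCoeffOn zero_lt_one (fun x ↦ (bernoulliFun 1 x : ℂ)) k =
      (1 / k / (2 * π) : ℝ) * Complex.I := by
  have h := bernoulliFourierCoeff_eq one_ne_zero k
  rw [bernoulliFourierCoeff, Nat.factorial_one, Nat.cast_one, pow_one, mul_right_comm, ← div_div,
    Complex.div_I, neg_div, neg_mul, neg_neg] at h
  rw [h]
  push_cast
  ring

/-- At `k = ± n` the vanishing coefficient of `B₁` at `0` is encoded by `1 / 0 = 0`. -/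
theorem fourierCoeffOn_bernoulliFun_one_mul_cos (n : ℕ) (k : ℤ) :
    fourierCoeffOn zero_lt_one (fun x ↦ ((bernoulliFun 1 x * cos (2 * n * π * x) : ℝ) : ℂ)) k =
      ((1 / (k - n) + 1 / (k + n)) / (4 * π) : ℝ) * Complex.I := by
  have hint : IntervalIntegrable (fun x ↦ (bernoulliFun 1 x : ℂ)) volume 0 1 :=
    (Complex.continuous_ofReal.comp (continuous_bernoulliFun 1)).intervalIntegrable _ _
  have h := fourierCoeffOn_mul_cos hint n k
  simp only [← Complex.ofReal_mul, fourierCoeffOn_bernoulliFun_one, Int.cast_natCast] at h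
  rw [h]
  push_cast
  ring

theorem integral_bernoulliFun_one_mul_cos (n : ℕ) :
    ∫ x in (0 : ℝ)..1, bernoulliFun 1 x * cos (2 * n * π * x) = 0 := by
  have h := fourierCoeffOn_bernoulliFun_one_mul_cos n 0
  rw [fourierCoeffOn_ofReal_zero] at h
  simpa using h

theorem integral_bernoulliFun_two_mul_cos (n : ℕ) :
    ∫ x in (0 : ℝ)..1, bernoulliFun 2 x * cos (2 * n * π * x) = 1 / (2 * π ^ 2 * n ^ 2) := by
  have h : fourierCoeffOn zero_lt_one (fun x ↦ (bernoulliFun 2 x : ℂ)) n =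
      (1 / (2 * π ^ 2 * n ^ 2) : ℝ) := by
    have := bernoulliFourierCoeff_eq two_ne_zero n
    rw [bernoulliFourierCoeff] at this
    rw [this]
    simp only [mul_pow, Complex.I_sq, Nat.factorial_two, Int.cast_natCast]
    push_cast
    ring
  rw [integral_mul_cos_eq_re_fourierCoeffOn _
    ((continuous_bernoulliFun 2).intervalIntegrable _ _), h, Complex.ofReal_re]

theorem integral_cos_two_mul_natCast_mul_pi_mul {n : ℕ} (hn : n ≠ 0) :
    ∫ x in (0 : ℝ)..1, cos (2 * n * π * x) = 0 := by
  rw [intervalIntegral.integral_comp_mul_left _ (by positivity), integral_cos]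
  have hsin : sin (2 * n * π) = 0 := mod_cast sin_nat_mul_pi (2 * n)
  rw [mul_one, mul_zero, hsin, sin_zero, sub_zero, smul_zero]

theorem integral_bernoulliFun_one_sq_mul_cos {n : ℕ} (hn : n ≠ 0) :
    ∫ x in (0 : ℝ)..1, bernoulliFun 1 x ^ 2 * cos (2 * n * π * x) = 1 / (2 * π ^ 2 * n ^ 2) := by
  have hsq (x : ℝ) : bernoulliFun 1 x ^ 2 * cos (2 * n * π * x) =
      bernoulliFun 2 x * cos (2 * n * π * x) + 1 / 12 * cos (2 * n * π * x) := by
    rw [bernoulliFun_one, bernoulliFun_two]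
    ring
  simp only [hsq]
  rw [intervalIntegral.integral_add (f := fun x ↦ bernoulliFun 2 x * cos (2 * n * π * x))
    (((continuous_bernoulliFun 2).mul (by fun_prop)).intervalIntegrable _ _)
    (Continuous.intervalIntegrable (by fun_prop) _ _), integral_bernoulliFun_two_mul_cos,
    intervalIntegral.integral_const_mul, integral_cos_two_mul_natCast_mul_pi_mul hn, mul_zero,
    add_zero]

theorem im_fourierCoeffOn_log_Gamma (k : ℕ) :
    (fourierCoeffOn zero_lt_one (fun x ↦ (log (Gamma x) : ℂ)) k).im =
      -((log (2 * π) + eulerMascheroniConstant + log k) / (2 * π * k)) := by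
  rcases eq_or_ne k 0 with rfl | hk
  · rw [Nat.cast_zero, fourierCoeffOn_ofReal_zero, Complex.ofReal_im]
    simp
  · rw [fourierCoeffOn_log_Gamma hk, Complex.sub_im, Complex.ofReal_im, Complex.im_ofReal_mul,
      Complex.I_im, mul_one, zero_sub]

theorem integral_log_Gamma_mul_cos {n : ℕ} (hn : n ≠ 0) :
    ∫ x in (0 : ℝ)..1, log (Gamma x) * cos (2 * n * π * x) = 1 / (4 * n) := by
  rw [integral_mul_cos_eq_re_fourierCoeffOn _ intervalIntegrable_log_Gamma,
    fourierCoeffOn_log_Gamma hn, Complex.sub_re, Complex.ofReal_re, Complex.re_ofReal_mul,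
    Complex.I_re, mul_zero, sub_zero]

theorem hasSum_im_fourierCoeffOn_integral_bernoulliFun_one_mul_cos {g : ℝ → ℝ}
    (hg : MemLp g 2 (volume.restrict (Ioc (0 : ℝ) 1))) (n : ℕ) :
    HasSum (fun k : ℕ ↦ (1 / ((k : ℝ) - n) + 1 / (k + n)) *
        (fourierCoeffOn zero_lt_one (fun x ↦ (g x : ℂ)) k).im)
      (2 * π * ∫ x in (0 : ℝ)..1, bernoulliFun 1 x * g x * cos (2 * n * π * x)) := by
  have hBcos : MemLp (fun x ↦ bernoulliFun 1 x * cos (2 * n * π * x)) 2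
      (volume.restrict (Ioc (0 : ℝ) 1)) :=
    memLp_Ioc_of_continuousOn ((continuous_bernoulliFun 1).mul (by fun_prop)).continuousOn 2
  have h := (hasSum_re_conj_fourierCoeffOn_mul_fourierCoeffOn zero_lt_one hBcos hg
    (integral_bernoulliFun_one_mul_cos n)).mul_left (2 * π)
  simp only [fourierCoeffOn_bernoulliFun_one_mul_cos, map_mul, Complex.conj_ofReal,
    Complex.conj_I, mul_assoc (Complex.ofReal _), Complex.re_ofReal_mul, neg_mul, Complex.neg_re,
    Complex.I_mul_re, neg_neg, Int.cast_natCast, sub_zero, inv_one, one_mul] at h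
  convert! h using 1
  · funext k
    field_simp
    ring
  · simp only [mul_right_comm]

theorem hasSum_one_div_sub_add_one_div_add_mul_log_div {n : ℕ} (hn : n ≠ 0) :
    HasSum (fun k : ℕ ↦ (1 / ((k : ℝ) - n) + 1 / (k + n)) * (log k / k))
      (-(4 * π ^ 2 *
          ∫ x in (0 : ℝ)..1, bernoulliFun 1 x * log (Gamma x) * cos (2 * n * π * x)) -
        2 * (log (2 * π) + eulerMascheroniConstant) / n ^ 2) := by
  have hGamma := hasSum_im_fourierCoeffOn_integral_bernoulliFun_one_mul_cos memLp_two_log_Gamma n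
  have hBern := hasSum_im_fourierCoeffOn_integral_bernoulliFun_one_mul_cos
    (memLp_Ioc_of_continuousOn (continuous_bernoulliFun 1).continuousOn 2) n
  simp only [← sq, integral_bernoulliFun_one_sq_mul_cos hn] at hBern
  convert! (hGamma.add
    (hBern.mul_left (log (2 * π) + eulerMascheroniConstant))).mul_left (-(2 * π)) using 1
  · funext k
    have him := congr_arg Complex.im (fourierCoeffOn_bernoulliFun_one k)
    rw [Complex.im_ofReal_mul, Complex.I_im, mul_one, Int.cast_natCast] at him
    rw [im_fourierCoeffOn_log_Gamma, him]
    field_simp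
    ring
  · field_simp
    ring

theorem hasSum_log_div_sq_sub_sq {n : ℕ} (hn : n ≠ 0) :
    HasSum (fun k : ℕ ↦ if k < 2 ∨ k = n then 0 else log k / ((k : ℝ) ^ 2 - n ^ 2))
      (-(2 * π ^ 2 * ∫ x in (0 : ℝ)..1, bernoulliFun 1 x * log (Gamma x) * cos (2 * n * π * x)) -
        (log (2 * π) + eulerMascheroniConstant) / n ^ 2 - log n / (4 * n ^ 2)) := by
  convert! ((hasSum_one_div_sub_add_one_div_add_mul_log_div hn).sub
    (hasSum_ite_eq n (log n / (2 * n ^ 2)))).div_const 2 using 1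
  · funext k
    have hn' : (n : ℝ) ≠ 0 := mod_cast hn
    rcases eq_or_ne k n with rfl | hkn
    · rw [if_pos (.inr rfl), if_pos rfl, sub_self, div_zero]
      field_simp
      ring
    rw [if_neg hkn, sub_zero]
    rcases lt_or_ge k 2 with hk | hk
    · rw [if_pos (.inl hk)]
      interval_cases k <;> simp
    · rw [if_neg (not_or.2 ⟨hk.not_gt, hkn⟩)]
      have hk' : (k : ℝ) ≠ 0 := mod_cast (by omega)
      have hsub : (k - n : ℝ) ≠ 0 := sub_ne_zero.2 (mod_cast hkn)
      have hadd : (k + n : ℝ) ≠ 0 := by positivity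
      rw [sq_sub_sq]
      field_simp
      ring
  · ring

theorem integral_mul_log_Gamma_mul_cos (n : ℕ) :
    ∫ x in (0 : ℝ)..1, x * log (Gamma x) * cos (2 * n * π * x) =
      (∫ x in (0 : ℝ)..1, bernoulliFun 1 x * log (Gamma x) * cos (2 * n * π * x)) +
        1 / 2 * ∫ x in (0 : ℝ)..1, log (Gamma x) * cos (2 * n * π * x) := by
  have hcos : IntervalIntegrable (fun x ↦ log (Gamma x) * cos (2 * n * π * x)) volume 0 1 :=
    intervalIntegrable_log_Gamma.mul_continuousOn (by fun_prop)
  simp only [mul_assoc (bernoulliFun 1 _)]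
  rw [← intervalIntegral.integral_const_mul, ← intervalIntegral.integral_add
    (hcos.continuousOn_mul (continuous_bernoulliFun 1).continuousOn) (hcos.const_mul _)]
  refine intervalIntegral.integral_congr fun x _ ↦ ?_
  simp only [bernoulliFun_one]
  ring

/-- For every positive integer `n`, the `n`-th Fourier cosine coefficient of
`x·log Γ(x)` on `(0,1)`:
`2·∫₀¹ x·log Γ(x)·cos(2nπx) dx = 1/(4n) − C/(π²n²) − log n/(4π²n²) − T_n/π²`,
where `C = log(2π) + γ` and `T_n = ∑_{i ≥ 2, i ≠ n} log i/(i² − n²)`. -/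
theorem fourier_cos_coeff_x_mul_log_Gamma (n : ℕ) (hn : 0 < n) :
    2 * ∫ x in (0:ℝ)..1, x * Real.log (Real.Gamma x) * Real.cos (2 * n * π * x) =
      1 / (4 * (n : ℝ)) - (Real.log (2 * π) + Real.eulerMascheroniConstant) / (π ^ 2 * n ^ 2)
        - Real.log n / (4 * π ^ 2 * n ^ 2)
        - (∑' i : ℕ, if i < 2 ∨ i = n then 0
            else Real.log i / ((i : ℝ) ^ 2 - (n : ℝ) ^ 2)) / π ^ 2 := by
  rw [integral_mul_log_Gamma_mul_cos, integral_log_Gamma_mul_cos hn.ne',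
    (hasSum_log_div_sq_sub_sq hn.ne').tsum_eq]
  field_simp
  ring
end
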